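/- The center of the group G₂₉ consists exactly of the four scalar matrices Id, i·Id, -Id, -i·Id; in particular Z(G₂₉) is cyclic of order 4 (isomorphic to μ₄). -/

import Mathlib

open Matrix Complex

/-- The generator `s₁ = diag(1,1,1,-1)` of Mukai's group `G₂₉`. -/
def s1 : Matrix (Fin 4) (Fin 4) ℂ := !![1,0,0,0; 0,1,0,0; 0,0,1,0; 0,0,0,-1]

/-- The generator `s₂ = (1/2)·[[1,1,i,i],[1,1,-i,-i],[-i,i,1,-1],[-i,i,-1,1]]` of `G₂₉`. -/
noncomputable def s2 : Matrix (Fin 4) (Fin 4) ℂ :=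
  (1/2 : ℂ) • !![1, 1, I, I; 1, 1, -I, -I; -I, I, 1, -1; -I, I, -1, 1]

/-- The generator `s₃` (the transposition of the first two coordinates) of `G₂₉`. -/
def s3 : Matrix (Fin 4) (Fin 4) ℂ := !![0,1,0,0; 1,0,0,0; 0,0,1,0; 0,0,0,1]

/-- The generator `s₄` (the transposition of the middle two coordinates) of `G₂₉`. -/
def s4 : Matrix (Fin 4) (Fin 4) ℂ := !![1,0,0,0; 0,0,1,0; 0,1,0,0; 0,0,0,1]

/-- Mukai's group `G₂₉` (the Shephard–Todd group `G_29`): the subgroup of `GL(4,ℂ)`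
generated by `s₁`, `s₂`, `s₃`, `s₄`. -/
def G29 : Subgroup (GL (Fin 4) ℂ) :=
  Subgroup.closure
    {g | (↑g : Matrix (Fin 4) (Fin 4) ℂ) ∈ ({s1, s2, s3, s4} : Set (Matrix (Fin 4) (Fin 4) ℂ))}

/-!
The generators are the reflections `x ↦ x - (w ⬝ᵥ x) • v` in four roots `v` that span `ℂ⁴`, and the
root of `s₂` is orthogonal to none of the others. A matrix commuting with a reflection has its root
as an eigenvector, and two non-orthogonal roots share their eigenvalue, so the centralizer of `G₂₉`
consists of scalars. A scalar `u` in `G₂₉` has `u ^ 8 = det ^ 2 = 1` and lies in the field `ℚ(i)` of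
the matrix entries, whose roots of unity are the fourth ones. Conversely, the Coxeter element
`c = s₁s₂s₃s₄` has order `20`, and `c ^ 5` is the scalar `i`.
-/

open IntermediateField

section Reflection

variable {n R : Type*} [Fintype n] [DecidableEq n] [CommRing R] {v w : n → R}

theorem one_sub_vecMulVec_mul_self (h : w ⬝ᵥ v = 2) :
    (1 - vecMulVec v w) * (1 - vecMulVec v w) = 1 := by
  have hsq : vecMulVec v w * vecMulVec v w = 2 • vecMulVec v w := by
    rw [vecMulVec_mul_vecMulVec, h, ofNat_smul_eq_nsmul, vecMulVec_smul]
  rw [mul_sub, sub_mul, sub_mul, hsq]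
  noncomm_ring

/-- The reflection `x ↦ x - (w ⬝ᵥ x) • v` with root `v` and coroot `w`, as an element of `GL n R`
which is by construction its own inverse. -/
def reflectionGL (v w : n → R) (h : w ⬝ᵥ v = 2) : GL n R where
  val := 1 - vecMulVec v w
  inv := 1 - vecMulVec v w
  val_inv := one_sub_vecMulVec_mul_self h
  inv_val := one_sub_vecMulVec_mul_self h

theorem coe_reflectionGL (h : w ⬝ᵥ v = 2) :
    (reflectionGL v w h : Matrix n n R) = 1 - vecMulVec v w :=
  rfl

theorem det_reflectionGL (h : w ⬝ᵥ v = 2) : (reflectionGL v w h).det = -1 := by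
  ext
  calc (1 - vecMulVec v w).det
    _ = 1 - w ⬝ᵥ v := by
      rw [vecMulVec_eq Unit, det_one_sub_mul_comm]
      simp
    _ = -1 := by rw [h]; norm_num

theorem reflectionGL_mem_units_matrix (h : w ⬝ᵥ v = 2) {S : Subring R} (hv : ∀ i, v i ∈ S)
    (hw : ∀ i, w i ∈ S) :
    reflectionGL v w h ∈ (S.matrix : Subring (Matrix n n R)).toSubmonoid.units := by
  have hmem : 1 - vecMulVec v w ∈ (S.matrix : Subring (Matrix n n R)) :=
    sub_mem (one_mem _) fun i j ↦ S.mul_mem (hv i) (hw j)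
  exact ⟨hmem, hmem⟩

end Reflection

theorem exists_eq_scalar_of_commute_one_sub_vecMulVec {n K ι : Type*} [Fintype n] [DecidableEq n]
    [Field K] {v w : ι → n → K} (hspan : Submodule.span K (Set.range v) = ⊤) (k₀ : ι)
    (hlink : ∀ k, w k ⬝ᵥ v k₀ ≠ 0) {g : Matrix n n K}
    (hg : ∀ k, Commute g (1 - vecMulVec (v k) (w k))) : ∃ c, g = scalar n c := by
  have hroot (k : ι) : (w k ⬝ᵥ v k₀) • (g *ᵥ v k) = (w k ⬝ᵥ g *ᵥ v k₀) • v k := by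
    have hcomm : Commute g (vecMulVec (v k) (w k)) := by
      simpa using (Commute.one_right g).sub_right (hg k)
    simpa [← mulVec_mulVec, vecMulVec_mulVec, mulVec_smul] using
      congrArg (· *ᵥ v k₀) hcomm.eq
  obtain ⟨c, hc⟩ : ∃ c : K, g *ᵥ v k₀ = c • v k₀ :=
    ⟨(w k₀ ⬝ᵥ v k₀)⁻¹ * (w k₀ ⬝ᵥ g *ᵥ v k₀), by
      rw [mul_smul, ← hroot k₀, inv_smul_smul₀ (hlink k₀)]⟩
  have heigen (k : ι) : g *ᵥ v k = c • v k := by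
    refine smul_right_injective _ (hlink k) ?_
    simp only [hroot k, hc, dotProduct_smul, smul_eq_mul, mul_comm c, mul_smul]
  refine ⟨c, toLin'.injective <| LinearMap.ext_on_range hspan fun k ↦ ?_⟩
  rw [toLin'_apply, toLin'_apply, heigen k, scalar_apply, ← smul_one_eq_diagonal, smul_mulVec,
    one_mulVec]

theorem pow_eq_one_of_isOfFinOrder_of_isCyclotomicExtension {K : Type*} [Field K] [NumberField K]
    {n : ℕ} [NeZero n] [IsCyclotomicExtension {n} ℚ K] (hn : Even n) {z : K}
    (hz : IsOfFinOrder z) : z ^ n = 1 := by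
  have : NeZero (orderOf z) := ⟨hz.orderOf_pos.ne'⟩
  have hdvd := NumberField.Units.dvd_torsionOrder_of_isPrimitiveRoot (IsPrimitiveRoot.orderOf z)
  rw [IsCyclotomicExtension.Rat.torsionOrder_eq (n := n), if_pos hn] at hdvd
  exact orderOf_dvd_iff_pow_eq_one.mp hdvd

theorem pow_eq_one_of_mem_adjoin_of_isOfFinOrder {L : Type*} [Field L] [CharZero L] {n : ℕ}
    [NeZero n] {ζ z : L} (hζ : IsPrimitiveRoot ζ n) (hn : Even n) (hmem : z ∈ ℚ⟮ζ⟯)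
    (hz : IsOfFinOrder z) : z ^ n = 1 := by
  have hint : IsIntegral ℚ ζ := (hζ.isIntegral (NeZero.pos n)).tower_top
  have : IsCyclotomicExtension {n} ℚ ℚ⟮ζ⟯ := by
    change IsCyclotomicExtension {n} ℚ ℚ⟮ζ⟯.toSubalgebra
    rw [adjoin_simple_toSubalgebra_of_isAlgebraic hint.isAlgebraic]
    exact hζ.adjoin_isCyclotomicExtension ℚ
  have : NumberField ℚ⟮ζ⟯ := IsCyclotomicExtension.numberField {n} ℚ _
  obtain ⟨m, hm, hzm⟩ := isOfFinOrder_iff_pow_eq_one.mp hz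
  have hz' : IsOfFinOrder (⟨z, hmem⟩ : ℚ⟮ζ⟯) :=
    isOfFinOrder_iff_pow_eq_one.mpr ⟨m, hm, Subtype.ext hzm⟩
  exact congrArg Subtype.val (pow_eq_one_of_isOfFinOrder_of_isCyclotomicExtension hn hz')

namespace G29

/-- Roots of the reflections `s₁, s₂, s₃, s₄`, in this order. -/
def root : Fin 4 → Fin 4 → ℂ :=
  ![![0, 0, 0, 1], ![1, -1, I, I], ![1, -1, 0, 0], ![0, 1, -1, 0]]

/-- Coroots of the reflections `s₁, s₂, s₃, s₄`: the complex conjugates of the roots, scaled to pair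
to `2` with them. -/
noncomputable def coroot : Fin 4 → Fin 4 → ℂ :=
  ![![0, 0, 0, 2], (1 / 2 : ℂ) • ![1, -1, -I, -I], ![1, -1, 0, 0], ![0, 1, -1, 0]]

theorem coroot_dotProduct_root (k : Fin 4) : coroot k ⬝ᵥ root k = 2 := by
  fin_cases k <;> simp [coroot, root, mul_assoc] <;> norm_num

theorem coroot_dotProduct_root_one_ne_zero (k : Fin 4) : coroot k ⬝ᵥ root 1 ≠ 0 := by
  fin_cases k <;> simp [coroot, root] <;> norm_num [Complex.ext_iff]

theorem det_root_ne_zero : (of root).det ≠ 0 := by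
  simp [root, det_succ_row_zero, Fin.sum_univ_succ, Fin.succAbove]

theorem span_range_root : Submodule.span ℂ (Set.range root) = ⊤ := by
  have hli : LinearIndependent ℂ root :=
    linearIndependent_rows_iff_isUnit.mpr <|
      (isUnit_iff_isUnit_det (of root)).mpr det_root_ne_zero.isUnit
  exact hli.span_eq_top_of_card_eq_finrank (by simp)

theorem root_mem_adjoin_I (k i : Fin 4) : root k i ∈ ℚ⟮I⟯ := by
  have hI : I ∈ ℚ⟮I⟯ := mem_adjoin_simple_self ℚ I
  fin_cases k <;> fin_cases i <;> simp [root, hI, zero_mem, one_mem]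

theorem coroot_mem_adjoin_I (k i : Fin 4) : coroot k i ∈ ℚ⟮I⟯ := by
  have hI : I ∈ ℚ⟮I⟯ := mem_adjoin_simple_self ℚ I
  fin_cases k <;> fin_cases i <;> simp [coroot, hI, zero_mem, one_mem, mul_mem]

/-- The generators `s₁, s₂, s₃, s₄` of `G₂₉`, as the reflections in the corresponding roots. -/
noncomputable def generator (k : Fin 4) : GL (Fin 4) ℂ :=
  reflectionGL (root k) (coroot k) (coroot_dotProduct_root k)

theorem coe_generator (k : Fin 4) :
    (generator k : Matrix (Fin 4) (Fin 4) ℂ) = ![s1, s2, s3, s4] k := by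
  rw [generator, coe_reflectionGL]
  ext i j
  fin_cases k <;> fin_cases i <;> fin_cases j <;>
    simp [root, coroot, s1, s2, s3, s4] <;> grind [I_mul_I]

theorem eq_closure : G29 = Subgroup.closure (Set.range generator) := by
  rw [G29]
  congr 1
  ext g
  simp [Fin.exists_fin_succ, Units.ext_iff, coe_generator, eq_comm]

theorem generator_mem (k : Fin 4) : generator k ∈ G29 := by
  rw [eq_closure]
  exact Subgroup.subset_closure (Set.mem_range_self k)

theorem det_sq_of_mem {g : GL (Fin 4) ℂ} (hg : g ∈ G29) : g.det ^ 2 = 1 := by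
  have hle : G29 ≤ ((powMonoidHom 2).comp GeneralLinearGroup.det).ker := by
    rw [eq_closure, Subgroup.closure_le]
    rintro _ ⟨k, rfl⟩
    simp [MonoidHom.mem_ker, generator, det_reflectionGL]
  exact hle hg

theorem apply_mem_adjoin_I_of_mem {g : GL (Fin 4) ℂ} (hg : g ∈ G29) (i j : Fin 4) :
    g i j ∈ ℚ⟮I⟯ := by
  let S : Subring (Matrix (Fin 4) (Fin 4) ℂ) := ℚ⟮I⟯.toSubfield.toSubring.matrix
  have hle : G29 ≤ S.toSubmonoid.units := by
    rw [eq_closure, Subgroup.closure_le]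
    rintro _ ⟨k, rfl⟩
    exact reflectionGL_mem_units_matrix _ (root_mem_adjoin_I k) (coroot_mem_adjoin_I k)
  exact (hle hg).1 i j

theorem pow_four_eq_one_of_scalar_mem {u : ℂˣ}
    (hu : GeneralLinearGroup.scalar (Fin 4) u ∈ G29) : u ^ 4 = 1 := by
  have hpow : u ^ 8 = 1 := by
    simpa [← pow_mul] using det_sq_of_mem hu
  have hfin : IsOfFinOrder (u : ℂ) :=
    isOfFinOrder_iff_pow_eq_one.mpr ⟨8, by norm_num, congrArg Units.val hpow⟩
  have hmem : (u : ℂ) ∈ ℚ⟮I⟯ := by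
    simpa using apply_mem_adjoin_I_of_mem hu 0 0
  ext
  exact pow_eq_one_of_mem_adjoin_of_isOfFinOrder isPrimitiveRoot_I (by decide) hmem hfin

theorem exists_scalar_eq_of_mem_centralizer {g : GL (Fin 4) ℂ}
    (hg : g ∈ Subgroup.centralizer G29) : ∃ u, GeneralLinearGroup.scalar (Fin 4) u = g := by
  have hcomm (k : Fin 4) : Commute (g : Matrix (Fin 4) (Fin 4) ℂ) (generator k) :=
    congrArg Units.val (Subgroup.mem_centralizer_iff.mp hg _ (generator_mem k)).symm
  obtain ⟨c, hc⟩ := exists_eq_scalar_of_commute_one_sub_vecMulVec span_range_root 1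
    coroot_dotProduct_root_one_ne_zero hcomm
  have hc₀ : c ≠ 0 := by
    rintro rfl
    exact g.ne_zero (by rw [hc, map_zero])
  exact ⟨Units.mk0 c hc₀, Units.ext hc.symm⟩

/-- The Coxeter element `s₁s₂s₃s₄` of `G₂₉`, whose fifth power is the scalar `i`. -/
noncomputable def coxeterElement : GL (Fin 4) ℂ :=
  generator 0 * generator 1 * generator 2 * generator 3

theorem coe_coxeterElement :
    (coxeterElement : Matrix (Fin 4) (Fin 4) ℂ) =
      (1 / 2 : ℂ) • !![1, I, 1, I; 1, -I, 1, -I; I, 1, -I, -1; -I, 1, I, -1] := by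
  simp [coxeterElement, coe_generator, s1, s2, s3, s4]

theorem coe_coxeterElement_sq :
    (coxeterElement : Matrix (Fin 4) (Fin 4) ℂ) ^ 2 =
      ((1 + I) / 2) • !![1, 1, 0, 0; 0, 0, -I, I; 1, -1, 0, 0; 0, 0, -I, -I] := by
  rw [coe_coxeterElement, sq]
  ext i j
  fin_cases i <;> fin_cases j <;> simp [mul_apply, Fin.sum_univ_four] <;> grind [I_mul_I]

theorem coe_coxeterElement_pow_five :
    (coxeterElement : Matrix (Fin 4) (Fin 4) ℂ) ^ 5 = scalar (Fin 4) I := by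
  rw [pow_succ, pow_mul _ 2 2, coe_coxeterElement_sq, coe_coxeterElement]
  ext i j
  fin_cases i <;> fin_cases j <;> simp [sq, mul_apply, Fin.sum_univ_four] <;> grind [I_mul_I]

theorem scalar_mem_of_mem_rootsOfUnity {u : ℂˣ} (hu : u ∈ rootsOfUnity 4 ℂ) :
    GeneralLinearGroup.scalar (Fin 4) u ∈ G29 := by
  let i : ℂˣ := Units.mk0 I I_ne_zero
  have hi : IsPrimitiveRoot i 4 := IsPrimitiveRoot.coe_units_iff.mp isPrimitiveRoot_I
  have hscalar : GeneralLinearGroup.scalar (Fin 4) i = coxeterElement ^ 5 :=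
    Units.ext coe_coxeterElement_pow_five.symm
  have hcox : coxeterElement ∈ G29 :=
    mul_mem (mul_mem (mul_mem (generator_mem 0) (generator_mem 1)) (generator_mem 2))
      (generator_mem 3)
  rw [← hi.zpowers_eq] at hu
  obtain ⟨k, rfl⟩ := hu
  simpa only [map_zpow, hscalar] using zpow_mem (pow_mem hcox 5) k

theorem inf_centralizer_eq :
    G29 ⊓ Subgroup.centralizer G29 =
      (rootsOfUnity 4 ℂ).map (GeneralLinearGroup.scalar (Fin 4)) := by
  ext g
  constructor
  · rintro ⟨hg, hcent⟩
    obtain ⟨u, rfl⟩ := exists_scalar_eq_of_mem_centralizer hcent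
    exact ⟨u, pow_four_eq_one_of_scalar_mem hg, rfl⟩
  · rintro ⟨u, hu, rfl⟩
    exact ⟨scalar_mem_of_mem_rootsOfUnity hu, Subgroup.mem_centralizer_iff.mpr fun h _ ↦
      (GeneralLinearGroup.scalar_commute u h).symm⟩

end G29

theorem pow_four_eq_one_iff {z : ℂ} : z ^ 4 = 1 ↔ z = 1 ∨ z = I ∨ z = -1 ∨ z = -I := by
  have hfactor : z ^ 4 - 1 = (z - 1) * ((z - I) * ((z + 1) * (z + I))) := by
    linear_combination (z ^ 2 - 1) * I_sq
  rw [← sub_eq_zero, hfactor]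
  simp [sub_eq_zero, add_eq_zero_iff_eq_neg]

theorem mem_map_scalar_rootsOfUnity_four_iff {n : Type*} [Fintype n] [DecidableEq n]
    {g : GL n ℂ} :
    g ∈ (rootsOfUnity 4 ℂ).map (GeneralLinearGroup.scalar n) ↔
      (g : Matrix n n ℂ) = 1 ∨ (g : Matrix n n ℂ) = I • (1 : Matrix n n ℂ) ∨
        (g : Matrix n n ℂ) = -1 ∨ (g : Matrix n n ℂ) = (-I) • (1 : Matrix n n ℂ) := by
  have hscalar (z : ℂ) : z • (1 : Matrix n n ℂ) = scalar n z := smul_one_eq_diagonal z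
  have hmem : g ∈ (rootsOfUnity 4 ℂ).map (GeneralLinearGroup.scalar n) ↔
      ∃ z : ℂ, z ^ 4 = 1 ∧ (g : Matrix n n ℂ) = z • (1 : Matrix n n ℂ) := by
    constructor
    · rintro ⟨u, hu, rfl⟩
      exact ⟨u, congrArg Units.val hu, (hscalar u).symm⟩
    · rintro ⟨z, hz, hg⟩
      exact ⟨Units.ofPowEqOne z 4 hz four_ne_zero, Units.pow_ofPowEqOne hz four_ne_zero,
        Units.ext (hg.trans (hscalar z)).symm⟩
  simp only [hmem, pow_four_eq_one_iff, or_and_right, exists_or, exists_eq_left, one_smul, neg_smul]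

theorem scalarGL_injective {n R : Type*} [Fintype n] [DecidableEq n] [Nonempty n] [Semiring R] :
    Function.Injective (GeneralLinearGroup.scalar n : Rˣ →* GL n R) :=
  Units.map_injective fun _ _ ↦ scalar_inj.mp

/-- The center of `G₂₉` consists exactly of the four scalar matrices
`Id, i·Id, -Id, -i·Id`; in particular it has order `4`. -/
theorem stmt_12 :
    {g : GL (Fin 4) ℂ | g ∈ G29 ∧ ∀ h ∈ G29, g * h = h * g} =
      {g : GL (Fin 4) ℂ |
        (↑g : Matrix (Fin 4) (Fin 4) ℂ) = 1 ∨
        (↑g : Matrix (Fin 4) (Fin 4) ℂ) = I • (1 : Matrix (Fin 4) (Fin 4) ℂ) ∨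
        (↑g : Matrix (Fin 4) (Fin 4) ℂ) = -1 ∨
        (↑g : Matrix (Fin 4) (Fin 4) ℂ) = (-I) • (1 : Matrix (Fin 4) (Fin 4) ℂ)} ∧
    Set.ncard {g : GL (Fin 4) ℂ | g ∈ G29 ∧ ∀ h ∈ G29, g * h = h * g} = 4 := by
  have hcenter : {g : GL (Fin 4) ℂ | g ∈ G29 ∧ ∀ h ∈ G29, g * h = h * g} =
      (rootsOfUnity 4 ℂ).map (GeneralLinearGroup.scalar (Fin 4)) := by
    rw [← G29.inf_centralizer_eq]
    ext g
    simp only [Subgroup.coe_inf, Set.mem_inter_iff, SetLike.mem_coe, Subgroup.mem_centralizer_iff,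
      Set.mem_ofPred_eq, eq_comm]
  rw [hcenter]
  refine ⟨Set.ext fun g ↦ mem_map_scalar_rootsOfUnity_four_iff, ?_⟩
  rw [Subgroup.coe_map, Set.ncard_image_of_injective _ scalarGL_injective]
  exact Complex.card_rootsOfUnity 4
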